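/- arXiv:2502.15685 — 6 statements merged into one kernel-verified Lean document; each statement's English description precedes it below -/
import Mathlib

section
/- Let k* be an integer with m < k* ≤ N. For every combination c = (c_ef, c_si, c_in) ∈ Δ(k_ef,k_si,k_in) such that c_ef(s) = 1 for every s with m < s ≤ N (so the k_ef effective positions are exactly {m+1,…,N}), one has z(p*, c) = Γ(k*); in particular this value does not depend on how the similar and incorrect indicators are arranged within {1,…,m}. -/
open Finset

noncomputable def Hfun (gef gsi gin : ℕ → ℝ) (m k : ℕ) : ℝ :=
  (∑ s ∈ Finset.Icc 1 (min k m), 1 / (gsi s + gin s)) +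
    ∑ s ∈ Finset.Icc (m + 1) k, 1 / (gef s + gin s)

noncomputable def Gfun (gef gsi gin : ℕ → ℝ) (m k : ℕ) : ℝ :=
  (∑ s ∈ Finset.Icc 1 (min k m), gsi s / (gsi s + gin s)) +
    ∑ s ∈ Finset.Icc (m + 1) k, gef s / (gef s + gin s)

noncomputable def Gam (gef gsi gin : ℕ → ℝ) (kef ksi N m k : ℕ) : ℝ :=
  ((kef : ℝ) + (ksi : ℝ) - (N : ℝ) + Gfun gef gsi gin m k) / Hfun gef gsi gin m k

noncomputable def pstar (gef gsi gin : ℕ → ℝ) (m kstar s : ℕ) : ℝ :=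
  if s ≤ m then 1 / (Hfun gef gsi gin m kstar * (gsi s + gin s))
  else if s ≤ kstar then 1 / (Hfun gef gsi gin m kstar * (gef s + gin s))
  else 0

noncomputable def chatEf (gef gsi gin : ℕ → ℝ) (kef ksi N m kstar s : ℕ) : ℝ :=
  if s ≤ m then 0
  else if s ≤ kstar then
    (Gam gef gsi gin kef ksi N m kstar + gin s) / (gef s + gin s)
  else
    ((kef : ℝ) - ∑ u ∈ Finset.Icc (m + 1) kstar,
        (Gam gef gsi gin kef ksi N m kstar + gin u) / (gef u + gin u)) /
      ((N : ℝ) - (kstar : ℝ))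

noncomputable def chatSi (gef gsi gin : ℕ → ℝ) (kef ksi N m kstar s : ℕ) : ℝ :=
  if s ≤ m then
    (Gam gef gsi gin kef ksi N m kstar + gin s) / (gsi s + gin s)
  else if s ≤ kstar then 0
  else
    ((ksi : ℝ) - ∑ u ∈ Finset.Icc 1 m,
        (Gam gef gsi gin kef ksi N m kstar + gin u) / (gsi u + gin u)) /
      ((N : ℝ) - (kstar : ℝ))

noncomputable def chatIn (gef gsi gin : ℕ → ℝ) (kef ksi N m kstar s : ℕ) : ℝ :=
  1 - chatEf gef gsi gin kef ksi N m kstar s - chatSi gef gsi gin kef ksi N m kstar s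

noncomputable def zGain (gef gsi gin p cef csi cin : ℕ → ℝ) (N : ℕ) : ℝ :=
  ∑ s ∈ Finset.Icc 1 N, p s * (cef s * gef s + csi s * gsi s - cin s * gin s)

def memDelta (cef csi cin : ℕ → ℝ) (N kef ksi kin : ℕ) : Prop :=
  (∀ s ∈ Finset.Icc 1 N,
    (cef s = 0 ∨ cef s = 1) ∧ (csi s = 0 ∨ csi s = 1) ∧ (cin s = 0 ∨ cin s = 1) ∧
      cef s + csi s + cin s = 1) ∧
  (∑ s ∈ Finset.Icc 1 N, cef s) = (kef : ℝ) ∧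
  (∑ s ∈ Finset.Icc 1 N, csi s) = (ksi : ℝ) ∧
  (∑ s ∈ Finset.Icc 1 N, cin s) = (kin : ℝ)

def memDeltaT (cef csi cin : ℕ → ℝ) (N kef ksi kin : ℕ) : Prop :=
  (∀ s ∈ Finset.Icc 1 N,
    cef s ∈ Set.Icc (0 : ℝ) 1 ∧ csi s ∈ Set.Icc (0 : ℝ) 1 ∧ cin s ∈ Set.Icc (0 : ℝ) 1 ∧
      cef s + csi s + cin s = 1) ∧
  (∑ s ∈ Finset.Icc 1 N, cef s) = (kef : ℝ) ∧
  (∑ s ∈ Finset.Icc 1 N, csi s) = (ksi : ℝ) ∧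
  (∑ s ∈ Finset.Icc 1 N, cin s) = (kin : ℝ)

theorem stmt_6
    (gef gsi gin : ℕ → ℝ) (N kef ksi kin m kstar : ℕ)
    (hN : 0 < N) (hm : m = ksi + kin) (hsum : kef + ksi + kin = N)
    (hgef : ∀ s ∈ Finset.Icc 1 N, 0 < gef s)
    (hgsi : ∀ s ∈ Finset.Icc 1 N, 0 < gsi s)
    (hgin : ∀ s ∈ Finset.Icc 1 N, 0 < gin s)
    (hsilt : ∀ s ∈ Finset.Icc 1 N, gsi s < gef s)
    (hinlt : ∀ s ∈ Finset.Icc 1 N, gin s < gef s)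
    (hdec : ∀ s ∈ Finset.Icc 1 N, ∀ t ∈ Finset.Icc 1 N, s < t → gef t < gef s)
    (hk1 : m < kstar) (hk2 : kstar ≤ N)
    (cef csi cin : ℕ → ℝ)
    (hc : memDelta cef csi cin N kef ksi kin)
    (hef : ∀ s : ℕ, m < s → s ≤ N → cef s = 1) :
    zGain gef gsi gin (pstar gef gsi gin m kstar) cef csi cin N =
      Gam gef gsi gin kef ksi N m kstar := by
  obtain ⟨hpt, h1, h2, h3⟩ := hc
  have hI : ∀ a b : ℕ, Finset.Icc (a+1) b = Finset.Ioc a b := by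
    intro a b; ext x; simp only [Finset.mem_Icc, Finset.mem_Ioc]; omega
  have hsplit : ∀ f : ℕ → ℝ, ∑ s ∈ Finset.Icc 1 N, f s =
      ∑ s ∈ Finset.Icc 1 m, f s + ∑ s ∈ Finset.Icc (m+1) kstar, f s
        + ∑ s ∈ Finset.Icc (kstar+1) N, f s := by
    intro f
    rw [show (1:ℕ) = 0 + 1 from rfl]
    simp only [hI]
    rw [Finset.sum_Ioc_consecutive f (Nat.zero_le m) hk1.le,
      Finset.sum_Ioc_consecutive f (Nat.zero_le kstar) hk2]
  have hcin : ∀ s, m < s → s ≤ N → csi s = 0 ∧ cin s = 0 := by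
    intro s hs hs'
    obtain ⟨-, b, c, d⟩ := hpt s (Finset.mem_Icc.2 ⟨by omega, hs'⟩)
    have := hef s hs hs'
    rcases b with b | b <;> rcases c with c | c <;> constructor <;> linarith
  have hcin0 : ∑ s ∈ Finset.Icc 1 m, cin s = kin := by
    rw [hsplit] at h3
    rw [Finset.sum_eq_zero (s := Finset.Icc (m+1) kstar), Finset.sum_eq_zero (s := Finset.Icc (kstar+1) N)] at h3
    · linarith
    · intro s hs
      rw [Finset.mem_Icc] at hs
      exact (hcin s (by omega) (by omega)).2
    · intro s hs
      rw [Finset.mem_Icc] at hs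
      exact (hcin s (by omega) (by omega)).2
  have hcsi0 : ∑ s ∈ Finset.Icc 1 m, csi s = ksi := by
    rw [hsplit] at h2
    rw [Finset.sum_eq_zero (s := Finset.Icc (m+1) kstar), Finset.sum_eq_zero (s := Finset.Icc (kstar+1) N)] at h2
    · linarith
    · intro s hs
      rw [Finset.mem_Icc] at hs
      exact (hcin s (by omega) (by omega)).1
    · intro s hs
      rw [Finset.mem_Icc] at hs
      exact (hcin s (by omega) (by omega)).1
  have hcef0 : ∑ s ∈ Finset.Icc 1 m, cef s = 0 := by
    have h : ∑ s ∈ Finset.Icc 1 m, (cef s + csi s + cin s) = ∑ s ∈ Finset.Icc 1 m, (1:ℝ) := by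
      apply Finset.sum_congr rfl
      intro s hs
      rw [Finset.mem_Icc] at hs
      exact (hpt s (Finset.mem_Icc.2 ⟨hs.1, by omega⟩)).2.2.2
    rw [Finset.sum_add_distrib, Finset.sum_add_distrib, hcin0, hcsi0] at h
    simp only [Finset.sum_const, Nat.card_Icc, nsmul_eq_mul, Nat.add_sub_cancel] at h
    rw [hm] at h ⊢
    push_cast at h
    linarith
  have hcef : ∀ s ∈ Finset.Icc 1 m, cef s = 0 := by
    refine (Finset.sum_eq_zero_iff_of_nonneg ?_).1 hcef0
    intro s hs
    rw [Finset.mem_Icc] at hs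
    rcases (hpt s (Finset.mem_Icc.2 ⟨hs.1, by omega⟩)).1 with h | h <;> rw [h]
    norm_num
  have hNr : (N : ℝ) = kef + ksi + kin := by rw [← hsum]; push_cast; ring
  unfold zGain Gam
  rw [hsplit]
  have e1 : ∑ s ∈ Finset.Icc 1 m, pstar gef gsi gin m kstar s *
      (cef s * gef s + csi s * gsi s - cin s * gin s) =
      ∑ s ∈ Finset.Icc 1 m, (gsi s / (gsi s + gin s) - cin s) / Hfun gef gsi gin m kstar := by
    apply Finset.sum_congr rfl
    intro s hs
    have h0 := hcef s hs
    rw [Finset.mem_Icc] at hs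
    have hsN : s ∈ Finset.Icc 1 N := Finset.mem_Icc.2 ⟨hs.1, by omega⟩
    have hd := (hpt s hsN).2.2.2
    have hp : gsi s + gin s ≠ 0 := (add_pos (hgsi s hsN) (hgin s hsN)).ne'
    have hcs : csi s = 1 - cin s := by linarith
    rw [pstar, if_pos hs.2, h0, hcs, one_div, mul_inv, div_eq_mul_inv _ (Hfun gef gsi gin m kstar)]
    field_simp
    ring
  have e2 : ∑ s ∈ Finset.Icc (m+1) kstar, pstar gef gsi gin m kstar s *
      (cef s * gef s + csi s * gsi s - cin s * gin s) =
      ∑ s ∈ Finset.Icc (m+1) kstar, (gef s / (gef s + gin s)) / Hfun gef gsi gin m kstar := by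
    apply Finset.sum_congr rfl
    intro s hs
    rw [Finset.mem_Icc] at hs
    obtain ⟨a, b⟩ := hcin s (by omega) (by omega)
    rw [pstar, if_neg (by omega), if_pos hs.2, a, b, hef s (by omega) (by omega),
      one_div, mul_inv, div_eq_mul_inv, div_eq_mul_inv]
    ring
  have e3 : ∑ s ∈ Finset.Icc (kstar+1) N, pstar gef gsi gin m kstar s *
      (cef s * gef s + csi s * gsi s - cin s * gin s) = 0 := by
    apply Finset.sum_eq_zero
    intro s hs
    rw [Finset.mem_Icc] at hs
    rw [pstar, if_neg (by omega), if_neg (by omega), zero_mul]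
  rw [e1, e2, e3, ← Finset.sum_div, ← Finset.sum_div, Finset.sum_sub_distrib, hcin0, hNr, Gfun,
    min_eq_right hk1.le]
  ring
end

section
/- Let k* be an integer with m < k* < N. For every probability vector p (p(s) ≥ 0 for all s and ∑_{s=1}^N p(s) = 1), the expected gain of the combination ĉ decomposes as z(p, ĉ) = Γ(k*)·∑_{s=1}^{k*} p(s) + ∑_{s=k*+1}^{N} p(s)·t(s), where t(s) = ĉ_ef(s)·(g_ef(s)+g_in(s)) + ĉ_si(s)·(g_si(s)+g_in(s)) − g_in(s). -/
open Finset

theorem stmt_8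
    (gef gsi gin : ℕ → ℝ) (N kef ksi kin m kstar : ℕ)
    (hN : 0 < N) (hm : m = ksi + kin) (hsum : kef + ksi + kin = N)
    (hgef : ∀ s ∈ Finset.Icc 1 N, 0 < gef s)
    (hgsi : ∀ s ∈ Finset.Icc 1 N, 0 < gsi s)
    (hgin : ∀ s ∈ Finset.Icc 1 N, 0 < gin s)
    (hsilt : ∀ s ∈ Finset.Icc 1 N, gsi s < gef s)
    (hinlt : ∀ s ∈ Finset.Icc 1 N, gin s < gef s)
    (hdec : ∀ s ∈ Finset.Icc 1 N, ∀ t ∈ Finset.Icc 1 N, s < t → gef t < gef s)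
    (hk1 : m < kstar) (hk2 : kstar < N)
    (p : ℕ → ℝ) (hp : ∀ s ∈ Finset.Icc 1 N, 0 ≤ p s)
    (hp1 : (∑ s ∈ Finset.Icc 1 N, p s) = 1) :
    zGain gef gsi gin p (chatEf gef gsi gin kef ksi N m kstar)
        (chatSi gef gsi gin kef ksi N m kstar)
        (chatIn gef gsi gin kef ksi N m kstar) N =
      Gam gef gsi gin kef ksi N m kstar * (∑ s ∈ Finset.Icc 1 kstar, p s) +
        ∑ s ∈ Finset.Icc (kstar + 1) N,
          p s *
            (chatEf gef gsi gin kef ksi N m kstar s * (gef s + gin s) +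
              chatSi gef gsi gin kef ksi N m kstar s * (gsi s + gin s) - gin s) := by
  have hsplit : Finset.Icc 1 N = Finset.Icc 1 kstar ∪ Finset.Icc (kstar + 1) N := by
    ext x
    simp only [Finset.mem_union, Finset.mem_Icc]
    omega
  have hdisj : Disjoint (Finset.Icc 1 kstar) (Finset.Icc (kstar + 1) N) := by
    rw [Finset.disjoint_left]
    intro x hx hy
    simp only [Finset.mem_Icc] at hx hy
    omega
  unfold zGain
  rw [hsplit, Finset.sum_union hdisj, Finset.mul_sum]
  congr 1
  · apply Finset.sum_congr rfl
    intro s hs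
    rw [Finset.mem_Icc] at hs
    have hs' : s ∈ Finset.Icc 1 N := by
      rw [Finset.mem_Icc]
      omega
    have h1 := hgef s hs'
    have h2 := hgsi s hs'
    have h3 := hgin s hs'
    have h4 : gef s + gin s ≠ 0 := by positivity
    have h5 : gsi s + gin s ≠ 0 := by positivity
    unfold chatIn chatEf chatSi
    by_cases hsm : s ≤ m
    · simp only [hsm, if_true]
      field_simp
      ring
    · simp only [hsm, hs.2, if_true, if_false]
      field_simp
      ring
  · apply Finset.sum_congr rfl
    intro s _
    unfold chatIn
    ring
end

section
/- Let k* be an integer with m < k* < N. For every s with k* < s ≤ N, if ĉ_si(s) ≥ 0, then t(s) := ĉ_ef(s)·(g_ef(s)+g_in(s)) + ĉ_si(s)·(g_si(s)+g_in(s)) − g_in(s) ≤ g_ef(s). -/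
open Finset

theorem stmt_9
    (gef gsi gin : ℕ → ℝ) (N kef ksi kin m kstar : ℕ)
    (hN : 0 < N) (hm : m = ksi + kin) (hsum : kef + ksi + kin = N)
    (hgef : ∀ s ∈ Finset.Icc 1 N, 0 < gef s)
    (hgsi : ∀ s ∈ Finset.Icc 1 N, 0 < gsi s)
    (hgin : ∀ s ∈ Finset.Icc 1 N, 0 < gin s)
    (hsilt : ∀ s ∈ Finset.Icc 1 N, gsi s < gef s)
    (hinlt : ∀ s ∈ Finset.Icc 1 N, gin s < gef s)
    (hdec : ∀ s ∈ Finset.Icc 1 N, ∀ t ∈ Finset.Icc 1 N, s < t → gef t < gef s)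
    (hk1 : m < kstar) (hk2 : kstar < N)
     :
    ∀ s : ℕ, kstar < s → s ≤ N → 0 ≤ chatSi gef gsi gin kef ksi N m kstar s →
      chatEf gef gsi gin kef ksi N m kstar s * (gef s + gin s) +
          chatSi gef gsi gin kef ksi N m kstar s * (gsi s + gin s) - gin s ≤
        gef s := by
  intro s hs hsN hsi
  have key : chatEf gef gsi gin kef ksi N m kstar s + chatSi gef gsi gin kef ksi N m kstar s = 1 := by
    have h1 : ¬ s ≤ m := by omega
    have h2 : ¬ s ≤ kstar := by omega
    have hNk : (0 : ℝ) < (N : ℝ) - (kstar : ℝ) := by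
      have : (kstar : ℝ) < N := by exact_mod_cast hk2
      linarith
    have hA : ∀ u ∈ Finset.Icc 1 m, 0 < gsi u + gin u := by
      intro u hu
      rw [Finset.mem_Icc] at hu
      have hu' : u ∈ Finset.Icc 1 N := Finset.mem_Icc.2 ⟨hu.1, by omega⟩
      linarith [hgsi u hu', hgin u hu']
    have hB : ∀ u ∈ Finset.Icc (m + 1) kstar, 0 < gef u + gin u := by
      intro u hu
      rw [Finset.mem_Icc] at hu
      have hu' : u ∈ Finset.Icc 1 N := Finset.mem_Icc.2 ⟨by omega, by omega⟩
      linarith [hgef u hu', hgin u hu']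
    have hmin : min kstar m = m := by omega
    have hH : 0 < Hfun gef gsi gin m kstar := by
      unfold Hfun
      rw [hmin]
      apply add_pos_of_nonneg_of_pos
      · exact Finset.sum_nonneg fun u hu => (one_div_pos.2 (hA u hu)).le
      · exact Finset.sum_pos (fun u hu => one_div_pos.2 (hB u hu))
          ⟨kstar, Finset.mem_Icc.2 ⟨by omega, le_rfl⟩⟩
    have hG : Gam gef gsi gin kef ksi N m kstar * Hfun gef gsi gin m kstar
        = (kef : ℝ) + (ksi : ℝ) - (N : ℝ) + Gfun gef gsi gin m kstar := by
      unfold Gam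
      exact div_mul_cancel₀ _ hH.ne'
    simp only [chatEf, chatSi, if_neg h1, if_neg h2]
    generalize Gam gef gsi gin kef ksi N m kstar = Γ at *
    have hSA : ∑ u ∈ Finset.Icc 1 m, (Γ + gin u) / (gsi u + gin u)
        = Γ * ∑ u ∈ Finset.Icc 1 m, 1 / (gsi u + gin u) + (m : ℝ)
          - ∑ u ∈ Finset.Icc 1 m, gsi u / (gsi u + gin u) := by
      have hc : (m : ℝ) = ∑ u ∈ Finset.Icc 1 m, (1 : ℝ) := by simp
      rw [hc, Finset.mul_sum, ← Finset.sum_add_distrib, ← Finset.sum_sub_distrib]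
      refine Finset.sum_congr rfl fun u hu => ?_
      have := (hA u hu).ne'
      field_simp
      ring
    have hSB : ∑ u ∈ Finset.Icc (m + 1) kstar, (Γ + gin u) / (gef u + gin u)
        = Γ * ∑ u ∈ Finset.Icc (m + 1) kstar, 1 / (gef u + gin u) + ((kstar : ℝ) - m)
          - ∑ u ∈ Finset.Icc (m + 1) kstar, gef u / (gef u + gin u) := by
      have hc : (kstar : ℝ) - m = ∑ u ∈ Finset.Icc (m + 1) kstar, (1 : ℝ) := by
        simp [Nat.cast_sub hk1.le]
      rw [hc, Finset.mul_sum, ← Finset.sum_add_distrib, ← Finset.sum_sub_distrib]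
      refine Finset.sum_congr rfl fun u hu => ?_
      have := (hB u hu).ne'
      field_simp
      ring
    unfold Hfun Gfun at hG
    rw [hmin] at hG
    rw [← add_div, div_eq_one_iff_eq hNk.ne', hSA, hSB]
    linarith
  have hs' : s ∈ Finset.Icc 1 N := Finset.mem_Icc.2 ⟨by omega, hsN⟩
  have e : chatEf gef gsi gin kef ksi N m kstar s = 1 - chatSi gef gsi gin kef ksi N m kstar s := by
    linarith
  rw [e]
  nlinarith [mul_nonneg hsi (sub_nonneg.2 (hsilt s hs').le)]
end

section
/- Let k* be an integer with m < k* < N. Assume k_ef + k_si − N + G(k*) ≥ 0 and Γ(k*) ≥ Γ(k*+1). Then Γ(k*) ≥ g_ef(s) for every s with k* < s ≤ N; in particular Γ(k*) ≥ g_ef(k*+1). -/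
open Finset

theorem stmt_10
    (gef gsi gin : ℕ → ℝ) (N kef ksi kin m kstar : ℕ)
    (hN : 0 < N) (hm : m = ksi + kin) (hsum : kef + ksi + kin = N)
    (hgef : ∀ s ∈ Finset.Icc 1 N, 0 < gef s)
    (hgsi : ∀ s ∈ Finset.Icc 1 N, 0 < gsi s)
    (hgin : ∀ s ∈ Finset.Icc 1 N, 0 < gin s)
    (hsilt : ∀ s ∈ Finset.Icc 1 N, gsi s < gef s)
    (hinlt : ∀ s ∈ Finset.Icc 1 N, gin s < gef s)
    (hdec : ∀ s ∈ Finset.Icc 1 N, ∀ t ∈ Finset.Icc 1 N, s < t → gef t < gef s)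
    (hk1 : m < kstar) (hk2 : kstar < N)
    (hGpos : 0 ≤ (kef : ℝ) + (ksi : ℝ) - (N : ℝ) + Gfun gef gsi gin m kstar)
    (hmono : Gam gef gsi gin kef ksi N m (kstar + 1) ≤ Gam gef gsi gin kef ksi N m kstar) :
    (∀ s : ℕ, kstar < s → s ≤ N → gef s ≤ Gam gef gsi gin kef ksi N m kstar) ∧
    gef (kstar + 1) ≤ Gam gef gsi gin kef ksi N m kstar := by
  have hmem : kstar + 1 ∈ Finset.Icc 1 N := by simp; omega
  have hg := hgef _ hmem
  have hi := hgin _ hmem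
  have hw : 0 < 1 / (gef (kstar + 1) + gin (kstar + 1)) := by positivity
  have hH : 0 < Hfun gef gsi gin m kstar := by
    unfold Hfun
    apply add_pos_of_nonneg_of_pos
    · apply Finset.sum_nonneg
      intro s hs
      have hs' : s ∈ Finset.Icc 1 N := by
        simp only [Finset.mem_Icc, le_min_iff] at hs ⊢; omega
      have h1 := hgsi s hs'
      have h2 := hgin s hs'
      positivity
    · apply Finset.sum_pos
      · intro s hs
        have hs' : s ∈ Finset.Icc 1 N := by
          simp only [Finset.mem_Icc] at hs ⊢; omega
        have h1 := hgef s hs'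
        have h2 := hgin s hs'
        positivity
      · exact ⟨kstar, by simp only [Finset.mem_Icc]; omega⟩
  have e1 : min (kstar + 1) m = m := by omega
  have e2 : min kstar m = m := by omega
  have hH1 : Hfun gef gsi gin m (kstar + 1) = Hfun gef gsi gin m kstar
      + 1 / (gef (kstar + 1) + gin (kstar + 1)) := by
    unfold Hfun
    rw [e1, e2, Finset.sum_Icc_succ_top (by omega)]; ring
  have hG1 : Gfun gef gsi gin m (kstar + 1) = Gfun gef gsi gin m kstar
      + gef (kstar + 1) * (1 / (gef (kstar + 1) + gin (kstar + 1))) := by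
    unfold Gfun
    rw [e1, e2, Finset.sum_Icc_succ_top (by omega)]; ring
  have key : gef (kstar + 1) ≤ Gam gef gsi gin kef ksi N m kstar := by
    unfold Gam at hmono ⊢
    rw [hH1, hG1] at hmono
    generalize 1 / (gef (kstar + 1) + gin (kstar + 1)) = w at *
    rw [div_le_div_iff₀ (by linarith) hH] at hmono
    rw [le_div_iff₀ hH]
    refine le_of_mul_le_mul_right ?_ hw
    linarith
  refine ⟨fun s h1 h2 => ?_, key⟩
  rcases Nat.lt_or_ge (kstar + 1) s with h | h
  · exact (hdec _ hmem s (by simp only [Finset.mem_Icc]; omega) h).le.trans key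
  · obtain rfl : s = kstar + 1 := by omega
    exact key
end

section
/- Let k* be an integer with m < k* < N. Assume ĉ_si(s) ≥ 0 for every s with k* < s ≤ N, and assume Γ(k*) ≥ g_ef(s) for every s with k* < s ≤ N. Then for every probability vector p (p(s) ≥ 0 for all s and ∑_{s=1}^N p(s) = 1), z(p, ĉ) ≤ Γ(k*). -/
open Finset

theorem stmt_11
    (gef gsi gin : ℕ → ℝ) (N kef ksi kin m kstar : ℕ)
    (hN : 0 < N) (hm : m = ksi + kin) (hsum : kef + ksi + kin = N)
    (hgef : ∀ s ∈ Finset.Icc 1 N, 0 < gef s)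
    (hgsi : ∀ s ∈ Finset.Icc 1 N, 0 < gsi s)
    (hgin : ∀ s ∈ Finset.Icc 1 N, 0 < gin s)
    (hsilt : ∀ s ∈ Finset.Icc 1 N, gsi s < gef s)
    (hinlt : ∀ s ∈ Finset.Icc 1 N, gin s < gef s)
    (hdec : ∀ s ∈ Finset.Icc 1 N, ∀ t ∈ Finset.Icc 1 N, s < t → gef t < gef s)
    (hk1 : m < kstar) (hk2 : kstar < N)
    (hcsi : ∀ s : ℕ, kstar < s → s ≤ N → 0 ≤ chatSi gef gsi gin kef ksi N m kstar s)
    (hgam : ∀ s : ℕ, kstar < s → s ≤ N → gef s ≤ Gam gef gsi gin kef ksi N m kstar) :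
    ∀ p : ℕ → ℝ, (∀ s ∈ Finset.Icc 1 N, 0 ≤ p s) → (∑ s ∈ Finset.Icc 1 N, p s) = 1 →
      zGain gef gsi gin p (chatEf gef gsi gin kef ksi N m kstar)
          (chatSi gef gsi gin kef ksi N m kstar)
          (chatIn gef gsi gin kef ksi N m kstar) N ≤
        Gam gef gsi gin kef ksi N m kstar := by
  intro p hp hp1
  have hH : 0 < Hfun gef gsi gin m kstar := by
    unfold Hfun
    have h1 : 0 ≤ ∑ s ∈ Finset.Icc 1 (min kstar m), 1 / (gsi s + gin s) := by
      apply Finset.sum_nonneg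
      intro s hs
      have hs' : s ∈ Finset.Icc 1 N := by simp only [Finset.mem_Icc] at *; omega
      have := hgsi s hs'
      have := hgin s hs'
      positivity
    have h2 : 0 < ∑ s ∈ Finset.Icc (m + 1) kstar, 1 / (gef s + gin s) := by
      apply Finset.sum_pos
      · intro s hs
        have hs' : s ∈ Finset.Icc 1 N := by simp only [Finset.mem_Icc] at *; omega
        have := hgef s hs'
        have := hgin s hs'
        positivity
      · exact ⟨m + 1, by simp only [Finset.mem_Icc]; omega⟩
    linarith
  have hGH : Gam gef gsi gin kef ksi N m kstar * Hfun gef gsi gin m kstar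
      = (kef : ℝ) + (ksi : ℝ) - (N : ℝ) + Gfun gef gsi gin m kstar := by
    unfold Gam
    exact div_mul_cancel₀ _ hH.ne'
  have hNk : (0 : ℝ) < (N : ℝ) - (kstar : ℝ) := by
    have : (kstar : ℝ) < N := by exact_mod_cast hk2
    linarith
  have key : ∀ s, kstar < s → chatEf gef gsi gin kef ksi N m kstar s
      + chatSi gef gsi gin kef ksi N m kstar s = 1 := by
    intro s hs
    have a1 : ¬ s ≤ m := by omega
    have a2 : ¬ s ≤ kstar := by omega
    unfold chatEf chatSi
    rw [if_neg a1, if_neg a2, if_neg a1, if_neg a2, ← add_div, div_eq_one_iff_eq hNk.ne']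
    generalize Gam gef gsi gin kef ksi N m kstar = Γ at *
    unfold Hfun Gfun at hGH
    rw [min_eq_right hk1.le] at hGH
    have e1 : ∑ u ∈ Finset.Icc 1 m, (Γ + gin u) / (gsi u + gin u)
        = Γ * (∑ u ∈ Finset.Icc 1 m, 1 / (gsi u + gin u)) + m
          - ∑ u ∈ Finset.Icc 1 m, gsi u / (gsi u + gin u) := by
      have : (m : ℝ) = ∑ u ∈ Finset.Icc 1 m, (1 : ℝ) := by simp
      rw [this, Finset.mul_sum, ← Finset.sum_add_distrib, ← Finset.sum_sub_distrib]
      apply Finset.sum_congr rfl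
      intro u hu
      have hu' : u ∈ Finset.Icc 1 N := by simp only [Finset.mem_Icc] at *; omega
      have := hgsi u hu'
      have := hgin u hu'
      field_simp
      ring
    have e2 : ∑ u ∈ Finset.Icc (m + 1) kstar, (Γ + gin u) / (gef u + gin u)
        = Γ * (∑ u ∈ Finset.Icc (m + 1) kstar, 1 / (gef u + gin u)) + ((kstar : ℝ) - m)
          - ∑ u ∈ Finset.Icc (m + 1) kstar, gef u / (gef u + gin u) := by
      have : (kstar : ℝ) - m = ∑ u ∈ Finset.Icc (m + 1) kstar, (1 : ℝ) := by
        simp [Nat.cast_sub hk1.le]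
      rw [this, Finset.mul_sum, ← Finset.sum_add_distrib, ← Finset.sum_sub_distrib]
      apply Finset.sum_congr rfl
      intro u hu
      have hu' : u ∈ Finset.Icc 1 N := by simp only [Finset.mem_Icc] at *; omega
      have := hgef u hu'
      have := hgin u hu'
      field_simp
      ring
    rw [e1, e2]
    linarith
  have hle : ∀ s ∈ Finset.Icc 1 N,
      chatEf gef gsi gin kef ksi N m kstar s * gef s
        + chatSi gef gsi gin kef ksi N m kstar s * gsi s
        - chatIn gef gsi gin kef ksi N m kstar s * gin s
      ≤ Gam gef gsi gin kef ksi N m kstar := by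
    intro s hs
    have q1 := hgef s hs
    have q2 := hgsi s hs
    have q3 := hgin s hs
    have q4 := hsilt s hs
    unfold chatIn
    by_cases a2 : s ≤ kstar
    · by_cases a1 : s ≤ m
      · unfold chatEf chatSi
        rw [if_pos a1, if_pos a1]
        apply le_of_eq
        field_simp
        ring
      · unfold chatEf chatSi
        rw [if_neg a1, if_neg a1, if_pos a2, if_pos a2]
        apply le_of_eq
        field_simp
        ring
    · have hk := key s (by omega)
      have hsN : s ≤ N := (Finset.mem_Icc.mp hs).2
      have h1 := hcsi s (by omega) hsN
      have h2 := hgam s (by omega) hsN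
      have h3 : chatEf gef gsi gin kef ksi N m kstar s
        = 1 - chatSi gef gsi gin kef ksi N m kstar s := by linarith
      rw [h3]
      nlinarith [mul_nonneg h1 (sub_nonneg.mpr q4.le)]
  unfold zGain
  calc _ ≤ ∑ s ∈ Finset.Icc 1 N, p s * Gam gef gsi gin kef ksi N m kstar :=
        Finset.sum_le_sum fun s hs => mul_le_mul_of_nonneg_left (hle s hs) (hp s hs)
    _ = _ := by rw [← Finset.sum_mul, hp1, one_mul]
end

section
/- (Theorem 2) Let k* be an integer with m < k* < N. Assume ĉ_si(s) ≥ 0 for every s with k* < s ≤ N, and assume Γ(k*) ≥ g_ef(s) for every s with k* < s ≤ N. Then the supremum over all probability vectors p of z(p, ĉ) equals Γ(k*), and it is attained at every probability vector supported on {1,…,k*}; in particular z(p*, ĉ) = Γ(k*). -/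
open Finset

theorem aux_split (f : ℕ → ℝ) (a b c : ℕ) (h1 : a ≤ b) (h2 : b ≤ c) :
    ∑ s ∈ Finset.Icc (a + 1) c, f s =
      ∑ s ∈ Finset.Icc (a + 1) b, f s + ∑ s ∈ Finset.Icc (b + 1) c, f s := by
  have e : ∀ x y : ℕ, Finset.Icc (x + 1) y = Finset.Ioc x y := by
    intro x y; ext t; simp only [Finset.mem_Icc, Finset.mem_Ioc]; omega
  rw [e, e, e, Finset.sum_Ioc_consecutive f h1 h2]

theorem stmt_12
    (gef gsi gin : ℕ → ℝ) (N kef ksi kin m kstar : ℕ)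
    (hN : 0 < N) (hm : m = ksi + kin) (hsum : kef + ksi + kin = N)
    (hgef : ∀ s ∈ Finset.Icc 1 N, 0 < gef s)
    (hgsi : ∀ s ∈ Finset.Icc 1 N, 0 < gsi s)
    (hgin : ∀ s ∈ Finset.Icc 1 N, 0 < gin s)
    (hsilt : ∀ s ∈ Finset.Icc 1 N, gsi s < gef s)
    (hinlt : ∀ s ∈ Finset.Icc 1 N, gin s < gef s)
    (hdec : ∀ s ∈ Finset.Icc 1 N, ∀ t ∈ Finset.Icc 1 N, s < t → gef t < gef s)
    (hk1 : m < kstar) (hk2 : kstar < N)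
    (hcsi : ∀ s : ℕ, kstar < s → s ≤ N → 0 ≤ chatSi gef gsi gin kef ksi N m kstar s)
    (hgam : ∀ s : ℕ, kstar < s → s ≤ N → gef s ≤ Gam gef gsi gin kef ksi N m kstar) :
    IsGreatest
      {x : ℝ | ∃ p : ℕ → ℝ, (∀ s ∈ Finset.Icc 1 N, 0 ≤ p s) ∧
        (∑ s ∈ Finset.Icc 1 N, p s) = 1 ∧
        zGain gef gsi gin p (chatEf gef gsi gin kef ksi N m kstar)
          (chatSi gef gsi gin kef ksi N m kstar)
          (chatIn gef gsi gin kef ksi N m kstar) N = x}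
      (Gam gef gsi gin kef ksi N m kstar) ∧
    (∀ p : ℕ → ℝ, (∀ s ∈ Finset.Icc 1 N, 0 ≤ p s) → (∑ s ∈ Finset.Icc 1 N, p s) = 1 →
      (∀ s : ℕ, kstar < s → s ≤ N → p s = 0) →
      zGain gef gsi gin p (chatEf gef gsi gin kef ksi N m kstar)
          (chatSi gef gsi gin kef ksi N m kstar)
          (chatIn gef gsi gin kef ksi N m kstar) N =
        Gam gef gsi gin kef ksi N m kstar) ∧
    zGain gef gsi gin (pstar gef gsi gin m kstar)
        (chatEf gef gsi gin kef ksi N m kstar)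
        (chatSi gef gsi gin kef ksi N m kstar)
        (chatIn gef gsi gin kef ksi N m kstar) N =
      Gam gef gsi gin kef ksi N m kstar := by
  have hH : Hfun gef gsi gin m kstar = (∑ s ∈ Finset.Icc 1 m, 1 / (gsi s + gin s)) +
    ∑ s ∈ Finset.Icc (m + 1) kstar, 1 / (gef s + gin s) := by
    unfold Hfun; rw [min_eq_right hk1.le]
  have hG : Gfun gef gsi gin m kstar = (∑ s ∈ Finset.Icc 1 m, gsi s / (gsi s + gin s)) +
    ∑ s ∈ Finset.Icc (m + 1) kstar, gef s / (gef s + gin s) := by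
    unfold Gfun; rw [min_eq_right hk1.le]
  have psi : ∀ s ∈ Finset.Icc 1 N, 0 < gsi s + gin s := fun s hs =>
    add_pos (hgsi s hs) (hgin s hs)
  have pef : ∀ s ∈ Finset.Icc 1 N, 0 < gef s + gin s := fun s hs =>
    add_pos (hgef s hs) (hgin s hs)
  have m1 : ∀ s ∈ Finset.Icc 1 m, s ∈ Finset.Icc 1 N := by
    intro s hs; rw [Finset.mem_Icc] at *; omega
  have m2 : ∀ s ∈ Finset.Icc (m + 1) kstar, s ∈ Finset.Icc 1 N := by
    intro s hs; rw [Finset.mem_Icc] at *; omega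
  have Hpos : 0 < Hfun gef gsi gin m kstar := by
    rw [hH]
    apply add_pos_of_nonneg_of_pos
    · exact Finset.sum_nonneg fun s hs => (one_div_pos.2 (psi s (m1 s hs))).le
    · apply Finset.sum_pos
      · exact fun s hs => one_div_pos.2 (pef s (m2 s hs))
      · exact ⟨kstar, by rw [Finset.mem_Icc]; omega⟩
  have hGam : Gam gef gsi gin kef ksi N m kstar * Hfun gef gsi gin m kstar =
      (kef : ℝ) + (ksi : ℝ) - (N : ℝ) + Gfun gef gsi gin m kstar := by
    unfold Gam; rw [div_mul_cancel₀ _ Hpos.ne']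
  have hNk : (0 : ℝ) < (N : ℝ) - (kstar : ℝ) := by
    rw [sub_pos]; exact_mod_cast hk2
  have pstar_sum : ∑ s ∈ Finset.Icc 1 N, pstar gef gsi gin m kstar s = 1 := by
    have e1 := aux_split (pstar gef gsi gin m kstar) 0 m N (by omega) (by omega)
    have e2 := aux_split (pstar gef gsi gin m kstar) m kstar N (by omega) (by omega)
    rw [zero_add] at e1
    have a1 : ∑ s ∈ Finset.Icc 1 m, pstar gef gsi gin m kstar s =
        (Hfun gef gsi gin m kstar)⁻¹ * ∑ s ∈ Finset.Icc 1 m, 1 / (gsi s + gin s) := by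
      rw [Finset.mul_sum]
      refine Finset.sum_congr rfl fun s hs => ?_
      rw [Finset.mem_Icc] at hs
      unfold pstar; rw [if_pos hs.2, one_div, mul_inv, one_div]
    have a2 : ∑ s ∈ Finset.Icc (m + 1) kstar, pstar gef gsi gin m kstar s =
        (Hfun gef gsi gin m kstar)⁻¹ *
          ∑ s ∈ Finset.Icc (m + 1) kstar, 1 / (gef s + gin s) := by
      rw [Finset.mul_sum]
      refine Finset.sum_congr rfl fun s hs => ?_
      rw [Finset.mem_Icc] at hs
      unfold pstar; rw [if_neg (by omega), if_pos hs.2, one_div, mul_inv, one_div]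
    have a3 : ∑ s ∈ Finset.Icc (kstar + 1) N, pstar gef gsi gin m kstar s = 0 := by
      refine Finset.sum_eq_zero fun s hs => ?_
      rw [Finset.mem_Icc] at hs
      unfold pstar; rw [if_neg (by omega), if_neg (by omega)]
    rw [e1, e2, a1, a2, a3, add_zero, ← mul_add, ← hH, inv_mul_cancel₀ Hpos.ne']
  have pstar_nn : ∀ s ∈ Finset.Icc 1 N, 0 ≤ pstar gef gsi gin m kstar s := by
    intro s hs
    unfold pstar
    split_ifs
    · exact (one_div_pos.2 (mul_pos Hpos (psi s hs))).le
    · exact (one_div_pos.2 (mul_pos Hpos (pef s hs))).le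
    · exact le_rfl
  have pstar_supp : ∀ s : ℕ, kstar < s → s ≤ N → pstar gef gsi gin m kstar s = 0 := by
    intro s h1 _
    unfold pstar; rw [if_neg (by omega), if_neg (by omega)]
  -- key identity
  have key : ∑ u ∈ Finset.Icc (m + 1) kstar,
        (Gam gef gsi gin kef ksi N m kstar + gin u) / (gef u + gin u) +
      ∑ u ∈ Finset.Icc 1 m,
        (Gam gef gsi gin kef ksi N m kstar + gin u) / (gsi u + gin u) =
      (kef : ℝ) + ksi - N + kstar := by
    have b1 : ∑ u ∈ Finset.Icc 1 m,
        (Gam gef gsi gin kef ksi N m kstar + gin u) / (gsi u + gin u) =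
        Gam gef gsi gin kef ksi N m kstar * ∑ s ∈ Finset.Icc 1 m, 1 / (gsi s + gin s)
        + m - ∑ s ∈ Finset.Icc 1 m, gsi s / (gsi s + gin s) := by
      have : (m : ℝ) = ∑ s ∈ Finset.Icc 1 m, (1 : ℝ) := by simp
      rw [this, Finset.mul_sum, ← Finset.sum_add_distrib, ← Finset.sum_sub_distrib]
      refine Finset.sum_congr rfl fun s hs => ?_
      have := (psi s (m1 s hs)).ne'
      field_simp
      ring
    have b2 : ∑ u ∈ Finset.Icc (m + 1) kstar,
        (Gam gef gsi gin kef ksi N m kstar + gin u) / (gef u + gin u) =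
        Gam gef gsi gin kef ksi N m kstar *
          ∑ s ∈ Finset.Icc (m + 1) kstar, 1 / (gef s + gin s)
        + ((kstar : ℝ) - m) - ∑ s ∈ Finset.Icc (m + 1) kstar, gef s / (gef s + gin s) := by
      have : (kstar : ℝ) - m = ∑ s ∈ Finset.Icc (m + 1) kstar, (1 : ℝ) := by
        simp [Nat.cast_sub hk1.le]
      rw [this, Finset.mul_sum, ← Finset.sum_add_distrib, ← Finset.sum_sub_distrib]
      refine Finset.sum_congr rfl fun s hs => ?_
      have := (pef s (m2 s hs)).ne'
      field_simp
      ring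
    rw [hH, hG] at hGam
    rw [b1, b2]
    linarith
  have vlow : ∀ s ∈ Finset.Icc 1 N, s ≤ kstar →
      chatEf gef gsi gin kef ksi N m kstar s * gef s +
        chatSi gef gsi gin kef ksi N m kstar s * gsi s -
        chatIn gef gsi gin kef ksi N m kstar s * gin s =
      Gam gef gsi gin kef ksi N m kstar := by
    intro s hs hsk
    have h1 := (psi s hs).ne'
    have h2 := (pef s hs).ne'
    unfold chatIn chatEf chatSi
    by_cases h : s ≤ m
    · simp only [if_pos h]
      field_simp
      ring
    · simp only [if_neg h, if_pos hsk]
      field_simp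
      ring
  have vhigh : ∀ s ∈ Finset.Icc 1 N, kstar < s →
      chatEf gef gsi gin kef ksi N m kstar s * gef s +
        chatSi gef gsi gin kef ksi N m kstar s * gsi s -
        chatIn gef gsi gin kef ksi N m kstar s * gin s ≤
      Gam gef gsi gin kef ksi N m kstar := by
    intro s hs hsk
    have hsN := (Finset.mem_Icc.1 hs).2
    have hone : chatEf gef gsi gin kef ksi N m kstar s +
        chatSi gef gsi gin kef ksi N m kstar s = 1 := by
      unfold chatEf chatSi
      rw [if_neg (by omega), if_neg (by omega), if_neg (by omega), if_neg (by omega),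
        ← add_div, div_eq_one_iff_eq hNk.ne']
      linarith
    have hin : chatIn gef gsi gin kef ksi N m kstar s = 0 := by
      unfold chatIn; linarith
    have hef : chatEf gef gsi gin kef ksi N m kstar s =
        1 - chatSi gef gsi gin kef ksi N m kstar s := by linarith
    rw [hin, hef]
    have := mul_nonneg (hcsi s hsk hsN) (sub_nonneg.2 (hsilt s hs).le)
    have := hgam s hsk hsN
    linarith
  have att : ∀ p : ℕ → ℝ, (∀ s ∈ Finset.Icc 1 N, 0 ≤ p s) →
      (∑ s ∈ Finset.Icc 1 N, p s) = 1 →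
      (∀ s : ℕ, kstar < s → s ≤ N → p s = 0) →
      zGain gef gsi gin p (chatEf gef gsi gin kef ksi N m kstar)
          (chatSi gef gsi gin kef ksi N m kstar)
          (chatIn gef gsi gin kef ksi N m kstar) N =
        Gam gef gsi gin kef ksi N m kstar := by
    intro p _ hp1 hp2
    unfold zGain
    rw [← one_mul (Gam gef gsi gin kef ksi N m kstar), ← hp1, Finset.sum_mul]
    refine Finset.sum_congr rfl fun s hs => ?_
    by_cases h : s ≤ kstar
    · rw [vlow s hs h]
    · rw [hp2 s (by omega) (Finset.mem_Icc.1 hs).2, zero_mul, zero_mul]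
  have last := att _ pstar_nn pstar_sum pstar_supp
  refine ⟨⟨⟨_, pstar_nn, pstar_sum, last⟩, ?_⟩, att, last⟩
  rintro x ⟨p, hp0, hp1, rfl⟩
  unfold zGain
  rw [← one_mul (Gam gef gsi gin kef ksi N m kstar), ← hp1, Finset.sum_mul]
  refine Finset.sum_le_sum fun s hs => ?_
  refine mul_le_mul_of_nonneg_left ?_ (hp0 s hs)
  by_cases h : s ≤ kstar
  · exact (vlow s hs h).le
  · exact vhigh s hs (by omega)
end
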